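/- For every j ∈ {0, …, n−1}, the Pauli coefficient of D at the single-qubit Z string Z_j equals 2^{−n} · Σ_{x=0}^{2^n−1} (a + d·x)·(−1)^{bit_j(x)} = −(d/2)·2^j. -/

import Mathlib

/-- The `j`-th binary digit of `x`, as a natural number in `{0,1}`. -/
def bitN (j x : ℕ) : ℕ := if Nat.testBit x j then 1 else 0

/-!
The sign `(-1) ^ bit_j(x)` is the square wave `(-1) ^ ⌊x / b⌋` with `b = 2 ^ j`: constant on blocks
of length `b` and alternating between them. Pairing each `x` in an even block with `x + b` in the
next odd block, an affine function `a + d * x` contributes `-d * b` per pair, and there are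
`2 ^ n / 2` pairs below `2 ^ n`.
-/

open Finset

section SquareWave

variable {R : Type*} [Ring R]

theorem sum_range_mul_neg_one_pow_div (b m : ℕ) (f : ℕ → R) :
    ∑ x ∈ range (2 * b * m), f x * (-1) ^ (x / b) =
      ∑ q ∈ range m, ∑ r ∈ range b, (f (2 * b * q + r) - f (2 * b * q + r + b)) := by
  induction m with
  | zero => simp
  | succ m ih =>
    have split_last : 2 * b * (m + 1) = 2 * b * m + b + b := by ring
    rw [split_last, sum_range_add, sum_range_add, ih, sum_range_succ, add_assoc,
      ← sum_add_distrib]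
    congr 1
    refine sum_congr rfl fun r hr => ?_
    have hrb : r < b := mem_range.mp hr
    have even_block : (2 * b * m + r) / b = 2 * m :=
      Nat.div_eq_of_lt_le (by linarith) (by linarith)
    have odd_block : (2 * b * m + b + r) / b = 2 * m + 1 :=
      Nat.div_eq_of_lt_le (by linarith) (by linarith)
    rw [even_block, odd_block, pow_succ, (even_two_mul m).neg_one_pow, add_right_comm _ b r]
    simp only [mul_one, mul_neg, sub_eq_add_neg]

theorem sum_range_affine_mul_neg_one_pow_div (b m : ℕ) (a d : R) :
    ∑ x ∈ range (2 * b * m), (a + d * x) * (-1) ^ (x / b) = -(m * (b * (d * b))) := by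
  have pair_contribution (x : ℕ) : (a + d * x) - (a + d * (x + b : ℕ)) = -(d * b) := by
    rw [Nat.cast_add, mul_add]
    abel
  rw [sum_range_mul_neg_one_pow_div b m fun x => a + d * x]
  simp only [pair_contribution, sum_const, card_range, nsmul_eq_mul, mul_neg]

end SquareWave

theorem bitN_eq_div_two_pow_mod_two (j x : ℕ) : bitN j x = x / 2 ^ j % 2 := by
  rw [← Nat.toNat_testBit]
  cases h : x.testBit j <;> simp [bitN, h]

theorem neg_one_pow_bitN {M : Type*} [Monoid M] [HasDistribNeg M] (j x : ℕ) :
    (-1 : M) ^ bitN j x = (-1) ^ (x / 2 ^ j) :=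
  neg_one_pow_congr <| by
    rw [bitN_eq_div_two_pow_mod_two, Nat.even_iff, Nat.even_iff, Nat.mod_mod]

theorem two_mul_sum_range_affine_mul_neg_one_pow_bitN {R : Type*} [Ring R] {j n : ℕ}
    (hj : j < n) (a d : R) :
    2 * ∑ x ∈ range (2 ^ n), (a + d * x) * (-1) ^ bitN j x = -(2 ^ n * (d * 2 ^ j)) := by
  obtain ⟨k, rfl⟩ : ∃ k, n = j + 1 + k := Nat.exists_eq_add_of_le hj
  have sum_eq : ∑ x ∈ range (2 ^ (j + 1 + k)), (a + d * x) * (-1) ^ bitN j x =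
      -(2 ^ k * (2 ^ j * (d * 2 ^ j))) := by
    simp only [neg_one_pow_bitN]
    rw [pow_add, pow_succ', sum_range_affine_mul_neg_one_pow_div]
    simp only [Nat.cast_pow, Nat.cast_ofNat]
  have two_pow_eq : (2 : R) ^ (j + 1 + k) = 2 * 2 ^ k * 2 ^ j := by
    rw [← pow_succ', ← pow_add]
    congr 1
    omega
  rw [sum_eq, two_pow_eq, mul_neg]
  simp only [mul_assoc]

theorem stmt_2_general {K : Type*} [Field K] [NeZero (2 : K)] (n : ℕ) (a d : K) (j : Fin n) :
    (1 / (2 : K) ^ n) * ∑ x : Fin (2 ^ n), (a + d * (x.val : K)) * (-1 : K) ^ bitN j.val x.val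
      = -(d / 2) * (2 : K) ^ (j : ℕ) := by
  have two_ne : (2 : K) ≠ 0 := NeZero.ne 2
  rw [Fin.sum_univ_eq_sum_range fun x => (a + d * (x : K)) * (-1) ^ bitN j x]
  apply mul_left_cancel₀ two_ne
  rw [mul_left_comm, two_mul_sum_range_affine_mul_neg_one_pow_bitN j.isLt]
  field_simp

/-- The Pauli coefficient of the diagonal matrix `D` (with entries `a + d·x`) at the
single-qubit `Z` string `Z_j` equals
`2^{−n} · ∑_{x=0}^{2^n−1} (a + d·x)·(−1)^{bit_j(x)} = −(d/2)·2^j`. -/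
theorem stmt_2 (n : ℕ) (hn : 1 ≤ n) (a d : ℝ) (j : Fin n) :
    (1 / (2 : ℂ) ^ n) * ∑ x : Fin (2 ^ n),
        ((a : ℂ) + (d : ℂ) * (x.val : ℂ)) * (-1 : ℂ) ^ bitN j.val x.val
      = -((d : ℂ) / 2) * (2 : ℂ) ^ (j : ℕ) :=
  stmt_2_general n (a : ℂ) (d : ℂ) j
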